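/- Let n ≤ 3, let f ∈ ℂ[x_0,…,x_n]_d be a reduced homogeneous polynomial such that V(f) ⊂ ℙ^n is not a cone, and let 1 < k < d−1. Then there exist n+1 algebraically independent elements over ℂ among the k-th order partial derivatives {∂^α f : |α| = k}; equivalently, the k-th polar map of V(f) is not degenerate. -/

import Mathlib

/-!
If no `n + 1` of the `k`-th derivatives are algebraically independent, the Jacobian criterion gives
a nonzero polynomial vector field `v` with `∑ᵢ vᵢ ∂ᵢ∂^α f = 0` for all `|α| = k`
(`exists_algebraicIndependent_or_annihilator`). By Euler's identity the same holds for `|α| = 1` and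
`|α| = 2` (`annihilates_of_le`), that is, `v` kills the Hessian matrix `H` of `f` and the third
derivatives of `f`.

If `ker H` has rank one over `ℂ(x)`, differentiating `H v = 0` shows that every `∂_k v` is again in
`ker H`, hence proportional to `v`. So `v` is a multiple of a constant vector, and `V(f)` is a cone
(`eq_zero_of_ker_hessian_rank_le_one`).

The rank of `ker H` cannot be larger in at most four variables (`ker_hessian_rank_le_one`). The
gradient `∇f` is constant along the lines `a + s v(a)` for every `v ∈ ker H`
(`eval_pderiv_add_smul`). With two independent fields `v, u ∈ ker H`, put `W a = ⟨v(a), u(a)⟩` and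
`T a = ℂ a + W a`, of dimension `3`. On `T a` the gradient is `t ^ (d - 1) ∇f(a)`, with `t` the
coordinate along `a`. If `∇f(a), ∇f(b)` are independent, then `T a ⊓ T b`, which has dimension at
least `2`, is contained in `W a` and in `W b`, so `W a = W b`. Thus `W` is generically constant,
and `V(f)` is a cone.
-/

open MvPolynomial Module

/-- The differential operator `∂^α` on `ℂ[x_0,…,x_{N-1}]` given by a multi-index
`α : Fin N → ℕ`. -/
noncomputable def pd {N : ℕ} (α : Fin N → ℕ) :
    Module.End ℂ (MvPolynomial (Fin N) ℂ) :=
  (List.ofFn fun i =>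
    ((MvPolynomial.pderiv (R := ℂ) i).toLinearMap :
      Module.End ℂ (MvPolynomial (Fin N) ℂ)) ^ (α i)).prod

/-! ### Higher derivatives and Euler's identity -/

theorem pderiv_pderiv_comm {σ : Type*} (i j : σ) (p : MvPolynomial σ ℂ) :
    pderiv i (pderiv j p) = pderiv j (pderiv i p) := by
  ext m
  simp only [coeff_pderiv]
  rw [add_right_comm]
  by_cases h : i = j
  · subst h; ring
  · have h' : j ≠ i := fun e => h e.symm
    simp [h, h']; ring

theorem prod_ofFn_pow_add_single {M : Type*} [Monoid M] {N : ℕ} (x : Fin N → M)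
    (hx : ∀ i j, Commute (x i) (x j)) (α : Fin N → ℕ) (j : Fin N) :
    (List.ofFn fun i => x i ^ (α + Pi.single j 1 : Fin N → ℕ) i).prod =
      x j * (List.ofFn fun i => x i ^ α i).prod := by
  induction N with
  | zero => exact j.elim0
  | succ N ih =>
    rw [List.ofFn_succ, List.ofFn_succ, List.prod_cons, List.prod_cons]
    refine Fin.cases ?_ (fun j => ?_) j
    · simp [pow_succ', mul_assoc]
    · have := ih (fun i => x i.succ) (fun _ _ => hx _ _) (fun i => α i.succ) j
      have e : (fun i : Fin N => x i.succ ^ (α + Pi.single j.succ 1 : Fin (N+1) → ℕ) i.succ) =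
          fun i => x i.succ ^ ((fun i => α i.succ) + Pi.single j 1 : Fin N → ℕ) i := by
        funext i
        simp [Pi.single_apply]
      rw [e, this, ← mul_assoc, ← mul_assoc]
      congr 1
      simpa using ((hx 0 j.succ).pow_left (α 0)).eq

theorem pd_add_single {N : ℕ} (α : Fin N → ℕ) (j : Fin N) (p : MvPolynomial (Fin N) ℂ) :
    pd (α + Pi.single j 1) p = pderiv j (pd α p) := by
  unfold pd
  rw [prod_ofFn_pow_add_single]
  · rfl
  · intro i j
    exact LinearMap.ext fun p => pderiv_pderiv_comm i j p

theorem pd_zero {N : ℕ} (p : MvPolynomial (Fin N) ℂ) : pd 0 p = p := by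
  simp [pd]

theorem isHomogeneous_pd {N d : ℕ} {f : MvPolynomial (Fin N) ℂ} (hf : f.IsHomogeneous d) (m : ℕ) :
    ∀ α : Fin N → ℕ, ∑ t, α t = m → (pd α f).IsHomogeneous (d - m) := by
  induction m with
  | zero =>
    intro α h
    have : α = 0 := by
      funext i
      simpa using (Finset.sum_eq_zero_iff.1 h) i (Finset.mem_univ i)
    rw [this, pd_zero]; exact hf
  | succ m ih =>
    intro α h
    obtain ⟨j, -, hj⟩ := Finset.exists_ne_zero_of_sum_ne_zero (by omega : ∑ t, α t ≠ 0)
    have e : α = (α - Pi.single j 1) + Pi.single j 1 := by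
      refine (tsub_add_cancel_of_le fun i => ?_).symm
      by_cases hi : i = j
      · subst hi; simp; omega
      · simp [hi]
    rw [e] at h ⊢
    rw [pd_add_single]
    have := (ih (α - Pi.single j 1) (by
      simp only [Pi.add_apply, Finset.sum_add_distrib, Finset.sum_pi_single', Finset.mem_univ,
        if_true] at h
      omega)).pderiv (i := j)
    rwa [Nat.sub_sub] at this

/-- By Euler's identity, a vector field killing the gradients of all derivatives of `f` of order
`m + 1` kills those of order `m`. -/
theorem annihilates_of_succ {N d m : ℕ} {f : MvPolynomial (Fin N) ℂ} (hf : f.IsHomogeneous d)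
    (hm : m + 1 < d) (v : Fin N → MvPolynomial (Fin N) ℂ)
    (h : ∀ α : Fin N → ℕ, ∑ t, α t = m + 1 → ∑ i, v i * pderiv i (pd α f) = 0) :
    ∀ α : Fin N → ℕ, ∑ t, α t = m → ∑ i, v i * pderiv i (pd α f) = 0 := by
  intro α hα
  have key : (d - m - 1) • ∑ i, v i * pderiv i (pd α f) = 0 := by
    calc (d - m - 1) • ∑ i, v i * pderiv i (pd α f)
        = ∑ i, v i * ∑ j, X j * pderiv j (pderiv i (pd α f)) := by
          rw [Finset.smul_sum]
          refine Finset.sum_congr rfl fun i _ => ?_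
          rw [((isHomogeneous_pd hf m α hα).pderiv (i := i)).sum_X_mul_pderiv, mul_smul_comm]
      _ = ∑ j, X j * ∑ i, v i * pderiv i (pd (α + Pi.single j 1) f) := by
          simp_rw [Finset.mul_sum]
          rw [Finset.sum_comm]
          refine Finset.sum_congr rfl fun j _ => Finset.sum_congr rfl fun i _ => ?_
          rw [pd_add_single, pderiv_pderiv_comm i j]; ring
      _ = 0 := by
          refine Finset.sum_eq_zero fun j _ => ?_
          rw [h _ (by simp [Finset.sum_add_distrib, hα]), mul_zero]
  exact (smul_eq_zero.1 key).resolve_left (by omega)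

theorem annihilates_of_le {N d k : ℕ} {f : MvPolynomial (Fin N) ℂ} (hf : f.IsHomogeneous d)
    (hk : k < d) (v : Fin N → MvPolynomial (Fin N) ℂ)
    (h : ∀ α : Fin N → ℕ, ∑ t, α t = k → ∑ i, v i * pderiv i (pd α f) = 0) {m : ℕ} (hm : m ≤ k) :
    ∀ α : Fin N → ℕ, ∑ t, α t = m → ∑ i, v i * pderiv i (pd α f) = 0 := by
  induction hm using Nat.decreasingInduction with
  | self => exact h
  | of_succ m hm ih => exact annihilates_of_succ hf (by omega) v ih

/-! ### Polynomials with proportional derivatives, and the Jacobian criterion -/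

theorem totalDegree_pderiv_lt {σ : Type*} (i : σ) (p : MvPolynomial σ ℂ) (h : pderiv i p ≠ 0) :
    (pderiv i p).totalDegree < p.totalDegree := by
  classical
  obtain ⟨m, hm, e⟩ := Finset.exists_mem_eq_sup (pderiv i p).support
    (support_nonempty.2 h) (fun m => m.sum fun _ e => e)
  have h2 : m + Finsupp.single i 1 ∈ p.support := by
    rw [MvPolynomial.mem_support_iff, coeff_pderiv] at hm
    rw [MvPolynomial.mem_support_iff]
    exact left_ne_zero_of_mul hm
  have := le_totalDegree h2
  rw [totalDegree, e]
  rw [Finsupp.sum_add_index' (by simp) (by simp)] at this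
  simp at this
  omega

theorem eq_C_of_pderiv_eq_zero {σ : Type*} (p : MvPolynomial σ ℂ) (h : ∀ i, pderiv i p = 0) :
    p = C (coeff 0 p) := by
  classical
  ext m
  rw [coeff_C]
  split_ifs with hm
  · rw [hm]
  · obtain ⟨i, hi⟩ := Finsupp.ne_iff.1 (Ne.symm hm)
    have e : m - Finsupp.single i 1 + Finsupp.single i 1 = m := by
      refine tsub_add_cancel_of_le ?_
      rw [Finsupp.single_le_iff]
      simp at hi; omega
    have := coeff_pderiv (i := i) p (m - Finsupp.single i 1)
    rw [h i, e, coeff_zero] at this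
    exact (mul_eq_zero.1 this.symm).resolve_right (Nat.cast_add_one_ne_zero _)

/-- Two polynomials whose quotient has zero derivative are proportional: after division by the gcd,
each divides its own partial derivatives, so both are constant for degree reasons. -/
theorem eq_C_mul_of_wronskian {σ : Type*} (p q : MvPolynomial σ ℂ) (hq : q ≠ 0)
    (h : ∀ k, q * pderiv k p = p * pderiv k q) : ∃ c : ℂ, p = C c * q := by
  obtain ⟨p', q', g, hrel, rfl, rfl⟩ :=
    UniqueFactorizationMonoid.exists_reduced_factors' p q hq
  have hg : g ≠ 0 := left_ne_zero_of_mul hq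
  have hq' : q' ≠ 0 := right_ne_zero_of_mul hq
  have h' : ∀ k, q' * pderiv k p' = p' * pderiv k q' := by
    intro k
    have := h k
    rw [pderiv_mul, pderiv_mul] at this
    refine mul_left_cancel₀ (mul_ne_zero hg hg) ?_
    linear_combination this
  have aux : ∀ a b : MvPolynomial σ ℂ, IsRelPrime a b →
      (∀ k, b * pderiv k a = a * pderiv k b) → ∀ k, pderiv k b = 0 := by
    intro a b hab h k
    by_contra hne
    obtain ⟨c, hc⟩ : b ∣ pderiv k b := hab.symm.dvd_of_dvd_mul_left ⟨_, (h k).symm⟩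
    have hlt := totalDegree_pderiv_lt k b hne
    rw [hc] at hne hlt
    rw [totalDegree_mul_of_isDomain (left_ne_zero_of_mul hne) (right_ne_zero_of_mul hne)] at hlt
    omega
  have e1 := eq_C_of_pderiv_eq_zero q' (aux p' q' hrel h')
  have e2 := eq_C_of_pderiv_eq_zero p' (aux q' p' hrel.symm fun k => (h' k).symm)
  have hc : coeff 0 q' ≠ 0 := fun h0 => hq' (by rw [e1, h0, C_0])
  refine ⟨coeff 0 p' / coeff 0 q', ?_⟩
  calc g * p' = g * C (coeff 0 p' / coeff 0 q' * coeff 0 q') := by rw [div_mul_cancel₀ _ hc, ← e2]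
    _ = C (coeff 0 p' / coeff 0 q') * (g * C (coeff 0 q')) := by rw [C_mul]; ring
    _ = _ := by rw [← e1]

/-- The chain rule for an additive map `D` satisfying the Leibniz rule and killing `ℂ`. The identity
`D (a * b) = a * D b + b * D a` is a hypothesis, so that `D` need not be bundled as a derivation. -/
theorem chain_rule {σ A : Type*} [Fintype σ] [CommRing A] [Algebra ℂ A] (D : A →+ A)
    (hmul : ∀ a b, D (a * b) = a * D b + b * D a)
    (hD : ∀ c : ℂ, D (algebraMap ℂ A c) = 0) (x : σ → A) (p : MvPolynomial σ ℂ) :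
    D (aeval x p) = ∑ i, aeval x (pderiv i p) * D (x i) := by
  classical
  induction p using MvPolynomial.induction_on with
  | C a => simp [hD]
  | add p q hp hq => simp [hp, hq, add_mul, Finset.sum_add_distrib]
  | mul_X p j hp =>
    simp only [map_mul, aeval_X, hmul, hp, Derivation.leibniz, smul_eq_mul, pderiv_X, map_add,
      add_mul, Finset.sum_add_distrib, Finset.mul_sum]
    congr 1
    · rw [Finset.sum_eq_single j]
      · simp
      · intro b _ hb; simp [hb.symm]
      · simp
    · refine Finset.sum_congr rfl fun i _ => ?_
      ring

/-- The Jacobian criterion: differentiating a relation `p(g) = 0` gives relations `(∂ᵢp)(g) = 0`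
of smaller degree. -/
theorem algebraicIndependent_of_jacobian {N : ℕ} (g : Fin N → MvPolynomial (Fin N) ℂ)
    (hdet : (Matrix.of fun i j => pderiv j (g i)).det ≠ 0) : AlgebraicIndependent ℂ g := by
  rw [algebraicIndependent_iff]
  intro p
  induction hn : p.totalDegree using Nat.strong_induction_on generalizing p with
  | _ n ih =>
    intro hp
    have h0 : ∀ i, pderiv i p = 0 := by
      have hv : Matrix.vecMul (fun i => aeval g (pderiv i p))
          (Matrix.of fun i j => pderiv j (g i)) = 0 := by
        funext k
        have := chain_rule ((pderiv (R := ℂ) k).toLinearMap.toAddMonoidHom)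
          (fun a b => (pderiv k).leibniz a b)
          (fun c => (pderiv k).map_algebraMap c) g p
        rw [hp, map_zero] at this
        exact this.symm
      have hz := Matrix.eq_zero_of_vecMul_eq_zero hdet hv
      intro i
      by_contra hne
      exact hne (ih _ (hn ▸ totalDegree_pderiv_lt i p hne) _ rfl (congrFun hz i))
    have e := eq_C_of_pderiv_eq_zero p h0
    rw [e] at hp ⊢
    rw [aeval_C] at hp
    rw [(FaithfulSMul.algebraMap_eq_zero_iff ℂ _).1 hp, C_0]

/-! ### Constancy of the gradient along kernel directions of the Hessian -/

/-- The derivation `∂_k` of `ℂ[x]` extended to `ℂ[x][s]` coefficientwise, so that it kills `s`. -/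
noncomputable def coeffwisePDeriv {N : ℕ} (k : Fin N) :
    Polynomial (MvPolynomial (Fin N) ℂ) →+ Polynomial (MvPolynomial (Fin N) ℂ) :=
  letI : Differential (MvPolynomial (Fin N) ℂ) :=
    ⟨Derivation.mk' (pderiv (R := ℂ) k).toLinearMap.toAddMonoidHom.toIntLinearMap
      fun a b => (pderiv k).leibniz a b⟩
  (Differential.mapCoeffs (A := MvPolynomial (Fin N) ℂ)).toLinearMap.toAddMonoidHom

theorem coeff_coeffwisePDeriv {N : ℕ} (k : Fin N) (p : Polynomial (MvPolynomial (Fin N) ℂ))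
    (m : ℕ) : (coeffwisePDeriv k p).coeff m = pderiv k (p.coeff m) := rfl

theorem coeffwisePDeriv_mul {N : ℕ} (k : Fin N) (p q : Polynomial (MvPolynomial (Fin N) ℂ)) :
    coeffwisePDeriv k (p * q) = p * coeffwisePDeriv k q + q * coeffwisePDeriv k p :=
  letI : Differential (MvPolynomial (Fin N) ℂ) :=
    ⟨Derivation.mk' (pderiv (R := ℂ) k).toLinearMap.toAddMonoidHom.toIntLinearMap
      fun a b => (pderiv k).leibniz a b⟩
  (Differential.mapCoeffs (A := MvPolynomial (Fin N) ℂ)).leibniz p q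

attribute [irreducible] coeffwisePDeriv

/-- The substitution `g(x) ↦ g(x + s v(x))` from `ℂ[x]` to `ℂ[x][s]`. -/
noncomputable def flow {N : ℕ} (v : Fin N → MvPolynomial (Fin N) ℂ) :
    MvPolynomial (Fin N) ℂ →ₐ[ℂ] Polynomial (MvPolynomial (Fin N) ℂ) :=
  aeval fun i => Polynomial.C (X i) + Polynomial.X * Polynomial.C (v i)

theorem derivative_flow {N : ℕ} (v : Fin N → MvPolynomial (Fin N) ℂ)
    (g : MvPolynomial (Fin N) ℂ) :
    Polynomial.derivative (flow v g) = ∑ i, flow v (pderiv i g) * Polynomial.C (v i) := by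
  have := chain_rule (A := Polynomial (MvPolynomial (Fin N) ℂ))
    (Polynomial.derivative (R := MvPolynomial (Fin N) ℂ)).toAddMonoidHom
    (fun a b => by
      simp only [LinearMap.toAddMonoidHom_coe, Polynomial.derivative_mul]; ring)
    (fun c => Polynomial.derivative_C)
    (fun i => Polynomial.C (X i) + Polynomial.X * Polynomial.C (v i)) g
  simpa [flow] using this

theorem coeffwisePDeriv_C {N : ℕ} (k : Fin N) (q : MvPolynomial (Fin N) ℂ) :
    coeffwisePDeriv k (Polynomial.C q) = Polynomial.C (pderiv k q) := by
  ext1 m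
  rw [coeff_coeffwisePDeriv, Polynomial.coeff_C, Polynomial.coeff_C]
  split_ifs
  · rfl
  · exact map_zero _

theorem coeffwisePDeriv_X {N : ℕ} (k : Fin N) :
    coeffwisePDeriv k (Polynomial.X : Polynomial (MvPolynomial (Fin N) ℂ)) = 0 := by
  ext1 m
  rw [coeff_coeffwisePDeriv, Polynomial.coeff_X, Polynomial.coeff_zero]
  split_ifs
  · exact pderiv_one
  · exact map_zero _

theorem coeffwisePDeriv_flow {N : ℕ} (v : Fin N → MvPolynomial (Fin N) ℂ) (k : Fin N)
    (g : MvPolynomial (Fin N) ℂ) :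
    coeffwisePDeriv k (flow v g) = flow v (pderiv k g) +
      Polynomial.X * ∑ i, flow v (pderiv i g) * Polynomial.C (pderiv k (v i)) := by
  have hx : ∀ i, coeffwisePDeriv k (Polynomial.C (X i) + Polynomial.X * Polynomial.C (v i)) =
      Polynomial.C (pderiv k (X i)) + Polynomial.X * Polynomial.C (pderiv k (v i)) := by
    intro i
    rw [map_add, coeffwisePDeriv_mul, coeffwisePDeriv_C, coeffwisePDeriv_C, coeffwisePDeriv_X,
      mul_zero, add_zero]
  have hchain := chain_rule (A := Polynomial (MvPolynomial (Fin N) ℂ)) (coeffwisePDeriv k)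
    (coeffwisePDeriv_mul k)
    (fun c => by
      rw [Polynomial.algebraMap_apply, coeffwisePDeriv_C, MvPolynomial.algebraMap_eq, pderiv_C,
        Polynomial.C_0])
    (fun i => Polynomial.C (X i) + Polynomial.X * Polynomial.C (v i)) g
  refine hchain.trans ?_
  rw [Finset.mul_sum]
  have h1 : ∑ i, flow v (pderiv i g) * Polynomial.C (pderiv k (X i)) = flow v (pderiv k g) := by
    rw [Finset.sum_eq_single k]
    · rw [pderiv_X_self, Polynomial.C_1, mul_one]
    · intro b _ hb
      rw [pderiv_X_of_ne hb, Polynomial.C_0, mul_zero]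
    · exact fun h => absurd (Finset.mem_univ k) h
  rw [← h1, ← Finset.sum_add_distrib]
  refine Finset.sum_congr rfl fun i _ => ?_
  rw [hx i, mul_add, mul_left_comm Polynomial.X]
  rfl

theorem flow_coeff_zero {N : ℕ} (v : Fin N → MvPolynomial (Fin N) ℂ)
    (g : MvPolynomial (Fin N) ℂ) : (flow v g).coeff 0 = g := by
  have : ((Polynomial.constantCoeff (R := MvPolynomial (Fin N) ℂ)).comp
      (flow v).toRingHom) = RingHom.id _ := by
    refine MvPolynomial.ringHom_ext ?_ ?_
    · intro r
      simp only [RingHom.comp_apply, AlgHom.toRingHom_eq_coe, RingHom.coe_coe, RingHom.id_apply]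
      rw [← MvPolynomial.algebraMap_eq, AlgHom.commutes]
      simp [Polynomial.algebraMap_apply]
    · intro i
      simp [flow]
  exact RingHom.congr_fun this g

/-- If `v` is in the kernel of the Hessian of `f`, then `∇f(x + s v(x))` does not depend on `s`.
The coefficients of `s, …, s^m` being zero, the identity
`∑ⱼ vⱼ ∂_k[(∂ⱼf)(x + s v)] = A_k + s ∑ᵢ Aᵢ ∂_k vᵢ`, where `A = ∂ₛ ∇f(x + s v)`, compared at `s^m`
shows that the coefficient of `s^(m+1)` is zero too. -/
theorem coeff_flow_pderiv_eq_zero {N : ℕ} (f : MvPolynomial (Fin N) ℂ)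
    (v : Fin N → MvPolynomial (Fin N) ℂ)
    (hv : ∀ j, ∑ i, v i * pderiv i (pderiv j f) = 0) (m : ℕ) :
    ∀ j, (flow v (pderiv j f)).coeff (m + 1) = 0 := by
  induction m using Nat.strong_induction_on with
  | _ m ih =>
    -- `A j = ∂ₛ (∂ⱼf)(x + s v(x))` is also `∑ᵢ (∂ᵢ∂ⱼf)(x + s v(x)) vᵢ(x)`.
    have hder : ∀ j, Polynomial.derivative (flow v (pderiv j f)) =
        ∑ i, flow v (pderiv i (pderiv j f)) * Polynomial.C (v i) := fun j => derivative_flow v _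
    set A : Fin N → Polynomial (MvPolynomial (Fin N) ℂ) :=
      fun j => Polynomial.derivative (flow v (pderiv j f)) with hA
    have hAcoeff : ∀ j l, (A j).coeff l = (flow v (pderiv j f)).coeff (l + 1) * (l + 1) :=
      fun j l => Polynomial.coeff_derivative _ _
    -- The `x_k`-derivative of `(∂ⱼf)(x + s v(x))`, paired with `v`, expressed through `A`.
    have key : ∀ k, ∑ j, Polynomial.C (v j) * coeffwisePDeriv k (flow v (pderiv j f)) =
        A k + Polynomial.X * ∑ i, A i * Polynomial.C (pderiv k (v i)) := by
      intro k
      simp only [coeffwisePDeriv_flow, mul_add, Finset.sum_add_distrib]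
      congr 1
      · rw [hA]
        simp only [hder]
        refine Finset.sum_congr rfl fun j _ => ?_
        rw [pderiv_pderiv_comm k j, mul_comm]
      · simp only [hA, hder, Finset.mul_sum, Finset.sum_mul]
        rw [Finset.sum_comm]
        refine Finset.sum_congr rfl fun i _ => Finset.sum_congr rfl fun j _ => ?_
        rw [pderiv_pderiv_comm i j]; ring
    intro k
    have h1 := congrArg (fun p => Polynomial.coeff p m) (key k)
    simp only [Polynomial.finsetSum_coeff, Polynomial.coeff_C_mul, Polynomial.coeff_add,
      coeff_coeffwisePDeriv] at h1
    have hl : ∑ j, v j * pderiv k ((flow v (pderiv j f)).coeff m) = 0 := by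
      rcases m with _ | m
      · simp only [flow_coeff_zero]
        rw [← hv k]
        exact Finset.sum_congr rfl fun j _ => by rw [pderiv_pderiv_comm k j]
      · exact Finset.sum_eq_zero fun j _ => by rw [ih m (Nat.lt_succ_self m) j]; simp
    have hr : (Polynomial.X * ∑ i, A i * Polynomial.C (pderiv k (v i))).coeff m = 0 := by
      rcases m with _ | m
      · simp
      · rw [Polynomial.coeff_X_mul, Polynomial.finsetSum_coeff]
        exact Finset.sum_eq_zero fun j _ => by
          rw [Polynomial.coeff_mul_C, hAcoeff, ih m (Nat.lt_succ_self m) j]; simp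
    rw [hl, hr, add_zero, hAcoeff] at h1
    exact (mul_eq_zero.1 h1.symm).resolve_right (Nat.cast_add_one_ne_zero m)

theorem eval_pderiv_add_smul {N : ℕ} (f : MvPolynomial (Fin N) ℂ)
    (v : Fin N → MvPolynomial (Fin N) ℂ)
    (hv : ∀ j, ∑ i, v i * pderiv i (pderiv j f) = 0) (a : Fin N → ℂ) (s : ℂ) (j : Fin N) :
    eval (fun i => a i + s * eval a (v i)) (pderiv j f) = eval a (pderiv j f) := by
  have hcomp : ∀ g, (flow v g).eval₂ (eval a) s = eval (fun i => a i + s * eval a (v i)) g := by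
    intro g
    have : ((Polynomial.eval₂RingHom (eval a) s).comp (flow v).toRingHom) =
        eval (fun i => a i + s * eval a (v i)) := by
      refine MvPolynomial.ringHom_ext ?_ ?_
      · intro r
        simp only [RingHom.comp_apply, AlgHom.toRingHom_eq_coe, RingHom.coe_coe]
        rw [← MvPolynomial.algebraMap_eq, AlgHom.commutes]
        simp [Polynomial.algebraMap_apply]
      · intro i
        simp [flow, mul_comm s]
    exact RingHom.congr_fun this g
  have hconst : flow v (pderiv j f) = Polynomial.C (pderiv j f) := by
    ext1 m
    rcases m with _ | m
    · rw [flow_coeff_zero, Polynomial.coeff_C_zero]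
    · rw [coeff_flow_pderiv_eq_zero f v hv, Polynomial.coeff_C_succ]
  rw [← hcomp, hconst, Polynomial.eval₂_C]

/-! ### Algebraic independence or an annihilating vector field -/

/-- Either `N` members of `S` have nonzero Jacobian determinant, or the gradients of the members of
`S` do not span over the fraction field, and a polynomial vector field kills all of them. -/
theorem exists_algebraicIndependent_or_annihilator {N : ℕ} (S : Set (MvPolynomial (Fin N) ℂ)) :
    (∃ g : Fin N → MvPolynomial (Fin N) ℂ, (∀ i, g i ∈ S) ∧ AlgebraicIndependent ℂ g) ∨
    ∃ v : Fin N → MvPolynomial (Fin N) ℂ, v ≠ 0 ∧ ∀ p ∈ S, ∑ i, v i * pderiv i p = 0 := by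
  let R := MvPolynomial (Fin N) ℂ
  let K := FractionRing R
  let row : R → Fin N → K := fun p i => algebraMap R K (pderiv i p)
  by_cases htop : Submodule.span K (row '' S) = ⊤
  · left
    obtain ⟨r, hr, -, hli⟩ := Submodule.exists_fun_fin_finrank_span_eq K (row '' S)
    have hfin : finrank K (Submodule.span K (row '' S)) = N := by
      rw [htop, finrank_top, finrank_fin_fun]
    let e : Fin N → Fin (finrank K (Submodule.span K (row '' S))) := Fin.cast hfin.symm
    have he : Function.Injective e := Fin.cast_injective _
    choose g hgS hg using fun i => hr (e i)
    refine ⟨g, hgS, algebraicIndependent_of_jacobian g fun hdet => ?_⟩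
    have hli' : LinearIndependent K (fun i => row (g i)) := by
      have : (fun i => row (g i)) = r ∘ e := funext hg
      rw [this]; exact hli.comp e he
    have hu := (Matrix.linearIndependent_rows_iff_isUnit
      (A := (Matrix.of fun i j => row (g i) j : Matrix (Fin N) (Fin N) K))).1 hli'
    rw [Matrix.isUnit_iff_isUnit_det] at hu
    refine hu.ne_zero ?_
    have : (Matrix.of fun i j => row (g i) j : Matrix (Fin N) (Fin N) K) =
      (algebraMap R K).mapMatrix (Matrix.of fun i j => pderiv j (g i)) := rfl
    rw [this, ← RingHom.map_det, hdet, map_zero]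
  · right
    obtain ⟨φ, hφ, hle⟩ := Submodule.exists_le_ker_of_lt_top _ (lt_top_iff_ne_top.2 htop)
    let w : Fin N → K := fun i => φ (Pi.single i 1)
    have hφw : ∀ x : Fin N → K, φ x = ∑ i, w i * x i := by
      intro x
      conv_lhs => rw [pi_eq_sum_univ' x]
      rw [map_sum]
      refine Finset.sum_congr rfl fun i _ => ?_
      rw [map_smul, smul_eq_mul, mul_comm]
    obtain ⟨b, hb⟩ := IsLocalization.exist_integer_multiples_of_finite (nonZeroDivisors R) w
    choose v hv using hb
    have hb0 : algebraMap R K b ≠ 0 :=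
      IsFractionRing.to_map_ne_zero_of_mem_nonZeroDivisors b.2
    refine ⟨v, fun h0 => hφ ?_, fun p hp => ?_⟩
    · have hw : ∀ i, w i = 0 := by
        intro i
        have := hv i
        rw [h0, Pi.zero_apply, map_zero, Algebra.smul_def] at this
        exact (mul_eq_zero.1 this.symm).resolve_left hb0
      refine LinearMap.ext fun x => ?_
      rw [hφw]; simp [hw]
    · have h1 : φ (row p) = 0 := hle (Submodule.subset_span ⟨p, hp, rfl⟩)
      refine IsFractionRing.injective R K ?_
      rw [map_sum, map_zero]
      calc ∑ i, algebraMap R K (v i * pderiv i p) = algebraMap R K b * ∑ i, w i * row p i := by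
            rw [Finset.mul_sum]
            refine Finset.sum_congr rfl fun i _ => ?_
            rw [map_mul, hv i, Algebra.smul_def, mul_assoc]
        _ = 0 := by rw [← hφw, h1, mul_zero]

/-! ### The kernel of the Hessian in low dimension -/

theorem eval_smul_of_isHomogeneous {N n : ℕ} {p : MvPolynomial (Fin N) ℂ} (hp : p.IsHomogeneous n)
    (t : ℂ) (a : Fin N → ℂ) : eval (t • a) p = t ^ n * eval a p := by
  rw [eval_eq', eval_eq', Finset.mul_sum]
  refine Finset.sum_congr rfl fun m hm => ?_
  have hdeg : ∑ i, m i = n := by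
    rw [← hp (MvPolynomial.mem_support_iff.1 hm), Finsupp.weight_apply,
      Finsupp.sum_fintype _ _ (by simp)]
    simp
  simp only [Pi.smul_apply, smul_eq_mul, mul_pow, Finset.prod_mul_distrib,
    Finset.prod_pow_eq_pow_sum, hdeg]
  ring

theorem sum_C_mul_pderiv_eq_zero {N d : ℕ} (hd : 2 ≤ d) {f : MvPolynomial (Fin N) ℂ}
    (hf : f.IsHomogeneous d) (c : Fin N → ℂ)
    (h : ∀ j, ∑ i, C (c i) * pderiv i (pderiv j f) = 0) : ∑ i, C (c i) * pderiv i f = 0 := by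
  have key : (d - 1) • ∑ i, C (c i) * pderiv i f = 0 := by
    calc (d - 1) • ∑ i, C (c i) * pderiv i f
        = ∑ i, C (c i) * ∑ j, X j * pderiv j (pderiv i f) := by
          rw [Finset.smul_sum]
          refine Finset.sum_congr rfl fun i _ => ?_
          rw [(hf.pderiv (i := i)).sum_X_mul_pderiv, mul_smul_comm]
      _ = ∑ j, X j * ∑ i, C (c i) * pderiv i (pderiv j f) := by
          simp_rw [Finset.mul_sum]
          rw [Finset.sum_comm]
          refine Finset.sum_congr rfl fun j _ => Finset.sum_congr rfl fun i _ => ?_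
          rw [pderiv_pderiv_comm i j]; ring
      _ = 0 := Finset.sum_eq_zero fun j _ => by rw [h j, mul_zero]
  exact (smul_eq_zero.1 key).resolve_left (by omega)

/-- When `V(f)` is not a cone, the kernel of the Hessian matrix contains no nonzero constant
vector. -/
theorem eq_zero_of_constant_mem_ker_hessian {N d : ℕ} (hd : 2 ≤ d) {f : MvPolynomial (Fin N) ℂ}
    (hf : f.IsHomogeneous d) (hcone : LinearIndependent ℂ (fun i => pderiv i f)) (c : Fin N → ℂ)
    (h : ∀ j, ∑ i, C (c i) * pderiv i (pderiv j f) = 0) : c = 0 := by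
  have h0 := sum_C_mul_pderiv_eq_zero hd hf c h
  simp_rw [C_mul'] at h0
  exact funext (Fintype.linearIndependent_iff.1 hcone c h0)

/-- Suppose the kernel of the Hessian matrix has rank at most one over `ℂ(x)`. If `v` kills both the
Hessian and the third derivatives of `f`, then every `∂_k v` lies in the kernel too, so it is
proportional to `v`. Hence `v` has constant direction, and it vanishes as `V(f)` is not a cone. -/
theorem eq_zero_of_ker_hessian_rank_le_one {N d : ℕ} (hd : 2 ≤ d) {f : MvPolynomial (Fin N) ℂ}
    (hf : f.IsHomogeneous d) (hcone : LinearIndependent ℂ (fun i => pderiv i f))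
    (hprop : ∀ v u : Fin N → MvPolynomial (Fin N) ℂ,
      (∀ j, ∑ i, v i * pderiv i (pderiv j f) = 0) → (∀ j, ∑ i, u i * pderiv i (pderiv j f) = 0) →
      ∀ i j, v i * u j = v j * u i)
    (v : Fin N → MvPolynomial (Fin N) ℂ)
    (h1 : ∀ j, ∑ i, v i * pderiv i (pderiv j f) = 0)
    (h2 : ∀ j l, ∑ i, v i * pderiv i (pderiv j (pderiv l f)) = 0) : v = 0 := by
  by_contra hne
  obtain ⟨i₀, hi₀⟩ := Function.ne_iff.1 hne
  have hder : ∀ k j, ∑ i, pderiv k (v i) * pderiv i (pderiv j f) = 0 := by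
    intro k j
    have e := congrArg (pderiv k) (h1 j)
    simp only [map_sum, map_zero, pderiv_mul, Finset.sum_add_distrib] at e
    rw [← e, left_eq_add, ← h2 k j]
    exact Finset.sum_congr rfl fun i _ => by rw [pderiv_pderiv_comm k i]
  have hc : ∀ j, ∃ c : ℂ, v j = C c * v i₀ := fun j =>
    eq_C_mul_of_wronskian _ _ hi₀ fun k => hprop v (fun i => pderiv k (v i)) h1 (hder k) i₀ j
  choose c hc using hc
  have hc0 : c = 0 := by
    refine eq_zero_of_constant_mem_ker_hessian hd hf hcone c fun j => ?_
    refine (mul_eq_zero.1 ?_).resolve_left hi₀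
    rw [← h1 j, Finset.mul_sum]
    refine Finset.sum_congr rfl fun i _ => ?_
    rw [hc i]; ring
  apply hi₀
  rw [hc i₀, hc0]; simp

/-- The case `t = 0` says that `∇f` vanishes at `v(a)` when `2 ≤ d`; it follows from the case
`t ≠ 0` by continuity. -/
theorem eval_pderiv_smul_add {N d : ℕ} {f : MvPolynomial (Fin N) ℂ}
    (hf : f.IsHomogeneous d) (v : Fin N → MvPolynomial (Fin N) ℂ)
    (hv : ∀ j, ∑ i, v i * pderiv i (pderiv j f) = 0) (a : Fin N → ℂ) (t : ℂ) (j : Fin N) :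
    eval (t • a + fun i => eval a (v i)) (pderiv j f) = t ^ (d - 1) * eval a (pderiv j f) := by
  have hcont : Continuous fun t : ℂ => eval (t • a + fun i => eval a (v i)) (pderiv j f) :=
    (MvPolynomial.continuous_eval _).comp (by fun_prop)
  refine congrFun (Continuous.ext_on (dense_compl_singleton (0 : ℂ)) hcont
    (by fun_prop : Continuous fun t : ℂ => t ^ (d - 1) * eval a (pderiv j f)) ?_) t
  intro t ht
  have ht0 : t ≠ 0 := ht
  have e : (t • a + fun i => eval a (v i)) = t • fun i => a i + t⁻¹ * eval a (v i) := by
    funext i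
    simp [mul_add, ht0]
  change eval (t • a + fun i => eval a (v i)) (pderiv j f) = _
  rw [e, eval_smul_of_isHomogeneous hf.pderiv, eval_pderiv_add_smul f v hv]

theorem exists_eval_ne_zero {N : ℕ} {p : MvPolynomial (Fin N) ℂ} (hp : p ≠ 0) :
    ∃ a, eval a p ≠ 0 := by
  by_contra! h
  exact hp (MvPolynomial.funext fun x => by rw [h x, map_zero])

/-- In at most four variables, the Hessian of a form whose zero set is not a cone has corank at most
one. Otherwise, take two independent kernel fields `v, u`. The gradient is proportional to `∇f(a)`
along `T a = ⟨a, v(a), u(a)⟩`, so for generic `a, b` it vanishes on `T a ⊓ T b`; this forces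
`⟨v(a), u(a)⟩ = T a ⊓ T b = ⟨v(b), u(b)⟩`, and the fixed vector `v(a)` is in the kernel
everywhere. -/
theorem ker_hessian_rank_le_one {N d : ℕ} (hN : N ≤ 4) (hd : 2 ≤ d) {f : MvPolynomial (Fin N) ℂ}
    (hf : f.IsHomogeneous d) (hcone : LinearIndependent ℂ (fun i => pderiv i f))
    (v u : Fin N → MvPolynomial (Fin N) ℂ)
    (hv : ∀ j, ∑ i, v i * pderiv i (pderiv j f) = 0)
    (hu : ∀ j, ∑ i, u i * pderiv i (pderiv j f) = 0) (i j : Fin N) :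
    v i * u j = v j * u i := by
  by_contra hminor
  have hij : i ≠ j := by rintro rfl; exact hminor rfl
  have hm : v i * u j - v j * u i ≠ 0 := sub_ne_zero.2 hminor
  -- `W a` consists of known kernel vectors of `Hess f (a)`; along `T a = ℂ a + W a` the
  -- gradient of `f` is proportional to its value at `a`.
  let va : (Fin N → ℂ) → Fin N → ℂ := fun a l => eval a (v l)
  let ua : (Fin N → ℂ) → Fin N → ℂ := fun a l => eval a (u l)
  let W : (Fin N → ℂ) → Submodule ℂ (Fin N → ℂ) := fun a => Submodule.span ℂ {va a, ua a}
  let T : (Fin N → ℂ) → Submodule ℂ (Fin N → ℂ) := fun a =>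
    Submodule.span ℂ (Set.range ![a, va a, ua a])
  have hcomb : ∀ β γ : ℂ, ∀ l,
      ∑ i, (C β * v i + C γ * u i) * pderiv i (pderiv l f) = 0 := by
    intro β γ l
    have : ∑ i, (C β * v i + C γ * u i) * pderiv i (pderiv l f) =
        C β * ∑ i, v i * pderiv i (pderiv l f) + C γ * ∑ i, u i * pderiv i (pderiv l f) := by
      rw [Finset.mul_sum, Finset.mul_sum, ← Finset.sum_add_distrib]
      exact Finset.sum_congr rfl fun i _ => by ring
    rw [this, hv, hu]; simp
  have hgrad : ∀ (a : Fin N → ℂ) (t β γ : ℂ) l,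
      eval (t • a + β • va a + γ • ua a) (pderiv l f) = t ^ (d - 1) * eval a (pderiv l f) := by
    intro a t β γ l
    rw [← eval_pderiv_smul_add hf _ (hcomb β γ) a t l, add_assoc]
    congr 2
    funext l
    simp [va, ua]
  have hpow : ∀ t : ℂ, t ^ (d - 1) = 0 → t = 0 := fun t ht => pow_eq_zero_iff (by omega) |>.1 ht
  -- A relation among the three vectors has coefficient `0` at `a`, because the gradient at the
  -- combination is `(g 0) ^ (d - 1)` times `∇f(a) ≠ 0`; the `2 × 2` minor settles the other two.
  have hrank : ∀ a, eval a (v i * u j - v j * u i) ≠ 0 → (∃ l, eval a (pderiv l f) ≠ 0) →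
      finrank ℂ (T a) = 3 := by
    rintro a ha ⟨l, hl⟩
    have hli : LinearIndependent ℂ ![a, va a, ua a] := by
      rw [Fintype.linearIndependent_iff]
      intro g hg
      replace hg : g 0 • a + g 1 • va a + g 2 • ua a = 0 := by
        simpa [Fin.sum_univ_three] using hg
      have h0 : g 0 = 0 := by
        refine hpow _ ((mul_eq_zero.1 ?_).resolve_right hl)
        have h2 := hgrad 0 0 0 0 l
        rw [← hgrad a (g 0) (g 1) (g 2) l, hg]
        simpa [show d - 1 ≠ 0 by omega] using h2
      rw [h0, zero_smul, zero_add] at hg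
      have hi := congrFun hg i
      have hj := congrFun hg j
      simp only [Pi.add_apply, Pi.smul_apply, smul_eq_mul, Pi.zero_apply, va, ua] at hi hj
      simp only [map_sub, map_mul] at ha
      have h1 : g 1 = 0 := by
        refine (mul_eq_zero.1 ?_).resolve_right ha
        linear_combination eval a (u j) * hi - eval a (u i) * hj
      have h2 : g 2 = 0 := by
        refine (mul_eq_zero.1 ?_).resolve_right ha
        linear_combination eval a (v i) * hj - eval a (v j) * hi
      intro l
      fin_cases l <;> assumption
    simpa using finrank_span_eq_card hli
  have hW : ∀ a, finrank ℂ (W a) ≤ 2 := fun a =>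
    (finrank_span_le_card _).trans (by
      rw [Set.toFinset_insert, Set.toFinset_singleton]; exact Finset.card_le_two)
  have hT : ∀ a z, z ∈ T a → ∃ t β γ : ℂ, z = t • a + β • va a + γ • ua a := by
    intro a z hz
    obtain ⟨c, rfl⟩ := (Submodule.mem_span_range_iff_exists_fun ℂ).1 hz
    exact ⟨c 0, c 1, c 2, by simp [Fin.sum_univ_three]⟩
  have hfj : pderiv j f ≠ 0 := hcone.ne_zero j
  obtain ⟨a, ha⟩ := exists_eval_ne_zero (mul_ne_zero hm hfj)
  rw [map_mul] at ha
  have ham := left_ne_zero_of_mul ha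
  have haj := right_ne_zero_of_mul ha
  have hq : C (eval a (pderiv j f)) * pderiv i f - C (eval a (pderiv i f)) * pderiv j f ≠ 0 := by
    intro h0
    have := (LinearIndepOn.pair_iff _ hij).1 (hcone.linearIndepOn _) (eval a (pderiv j f))
      (-eval a (pderiv i f)) (by
        rw [neg_smul, ← sub_eq_add_neg, ← C_mul', ← C_mul']; exact h0)
    exact haj this.1
  -- Since `∇f(a)` and `∇f(b)` are independent, a common point of `T a` and `T b` has coefficient
  -- `0` at `a` and at `b`; the dimension count `3 + 3 - N ≥ 2` then forces `T a ⊓ T b = W a`.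
  have hmem : ∀ b, eval b (v i * u j - v j * u i) ≠ 0 →
      eval b (C (eval a (pderiv j f)) * pderiv i f - C (eval a (pderiv i f)) * pderiv j f) ≠ 0 →
      va a ∈ W b := by
    intro b hbm hbq
    simp only [map_sub, map_mul, eval_C] at hbq
    have hb : ∃ l, eval b (pderiv l f) ≠ 0 := by
      by_contra! h
      rw [h i, h j] at hbq
      simp at hbq
    have hdim : 2 ≤ finrank ℂ (T a ⊓ T b : Submodule ℂ (Fin N → ℂ)) := by
      have e := Submodule.finrank_sup_add_finrank_inf_eq (T a) (T b)
      rw [hrank a ham ⟨j, haj⟩, hrank b hbm hb] at e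
      have := Submodule.finrank_le (T a ⊔ T b)
      rw [finrank_fin_fun] at this
      omega
    have hboth : ∀ z ∈ T a ⊓ T b, z ∈ W a ∧ z ∈ W b := by
      rintro z ⟨hza, hzb⟩
      obtain ⟨s, β, γ, rfl⟩ := hT a _ hza
      obtain ⟨t, β', γ', e⟩ := hT b _ hzb
      have hi := hgrad a s β γ i
      have hj := hgrad a s β γ j
      rw [e, hgrad] at hi hj
      have ht : t = 0 := by
        refine hpow t ((mul_eq_zero.1 ?_).resolve_right hbq)
        linear_combination eval a (pderiv j f) * hi - eval a (pderiv i f) * hj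
      have hs : s = 0 := by
        refine hpow s ((mul_eq_zero.1 ?_).resolve_right haj)
        rw [← hj, ht, zero_pow (by omega), zero_mul]
      refine ⟨?_, ?_⟩
      · rw [hs, zero_smul, zero_add]
        exact Submodule.mem_span_pair.2 ⟨β, γ, rfl⟩
      · rw [e, ht, zero_smul, zero_add]
        exact Submodule.mem_span_pair.2 ⟨β', γ', rfl⟩
    have ea : T a ⊓ T b = W a :=
      Submodule.eq_of_le_of_finrank_le (fun z hz => (hboth z hz).1) ((hW a).trans hdim)
    have hva : va a ∈ T a ⊓ T b := by
      rw [ea]; exact Submodule.subset_span (Set.mem_insert _ _)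
    exact (hboth _ hva).2
  -- So `Hess f (b)` kills the fixed vector `v(a)` for all `b` outside a hypersurface, hence always.
  have hker : va a = 0 := by
    refine eq_zero_of_constant_mem_ker_hessian hd hf hcone (va a) fun l => ?_
    refine (mul_eq_zero.1 ?_).resolve_left (mul_ne_zero hm hq)
    refine MvPolynomial.funext fun b => ?_
    rw [map_zero, map_mul]
    by_cases hb : eval b ((v i * u j - v j * u i) *
      (C (eval a (pderiv j f)) * pderiv i f - C (eval a (pderiv i f)) * pderiv j f)) = 0
    · rw [hb, zero_mul]
    · rw [map_mul] at hb
      obtain ⟨β, γ, e⟩ := Submodule.mem_span_pair.1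
        (hmem b (left_ne_zero_of_mul hb) (right_ne_zero_of_mul hb))
      have := congrArg (eval b) (hcomb β γ l)
      simp only [map_sum, map_mul, map_add, eval_C, map_zero] at this
      refine mul_eq_zero_of_right _ ?_
      simp only [map_sum, map_mul, eval_C]
      rw [← this]
      refine Finset.sum_congr rfl fun i _ => ?_
      rw [← e]; simp [va, ua]
  have hi := congrFun hker i
  have hj := congrFun hker j
  simp only [va, Pi.zero_apply] at hi hj
  apply ham
  simp [hi, hj]

/-- **Corollary.** Let `n ≤ 3`, let `f` be a reduced homogeneous polynomial of degree `d`
in `n+1` variables such that `V(f) ⊂ ℙ^n` is not a cone (equivalently, its first order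
partial derivatives are linearly independent over `ℂ`), and let `1 < k < d−1`.  Then
there are `n+1` algebraically independent elements over `ℂ` among the `k`-th order
partial derivatives of `f`; equivalently, the `k`-th polar map of `V(f)` is not
degenerate. -/
theorem nondegenerate_higher_polar_low_dimension
    {n d k : ℕ} (hn : n ≤ 3)
    (f : MvPolynomial (Fin (n + 1)) ℂ) (hf : f.IsHomogeneous d)
    (hred : Squarefree f)
    (hcone : LinearIndependent ℂ (fun i : Fin (n + 1) => pderiv i f))
    (hk1 : 1 < k) (hk2 : k + 1 < d) :
    ∃ g : Fin (n + 1) → MvPolynomial (Fin (n + 1)) ℂ,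
      (∀ i, ∃ α : Fin (n + 1) → ℕ, (∑ t, α t) = k ∧ g i = pd α f) ∧
      AlgebraicIndependent ℂ g := by
  rcases exists_algebraicIndependent_or_annihilator
    {g | ∃ α : Fin (n + 1) → ℕ, (∑ t, α t) = k ∧ g = pd α f} with h | ⟨v, hv0, hv⟩
  · exact h
  · refine absurd ?_ hv0
    have hvk : ∀ α : Fin (n + 1) → ℕ, ∑ t, α t = k → ∑ i, v i * pderiv i (pd α f) = 0 :=
      fun α hα => hv _ ⟨α, hα, rfl⟩
    have hpd1 : ∀ j, pd (0 + Pi.single j 1) f = pderiv j f := fun j => by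
      rw [pd_add_single, pd_zero]
    refine eq_zero_of_ker_hessian_rank_le_one (by omega) hf hcone
      (fun v u hv hu i j => ker_hessian_rank_le_one (by omega) (by omega) hf hcone v u hv hu i j) v
      (fun j => ?_) (fun j l => ?_)
    · rw [← hpd1]
      exact annihilates_of_le hf (by omega) v hvk (m := 1) (by omega) _ (by simp)
    · rw [← hpd1, ← pd_add_single]
      exact annihilates_of_le hf (by omega) v hvk (m := 2) (by omega) _
        (by simp [Finset.sum_add_distrib])
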